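/- Let Q be the set of squarefree odd integers greater than 1 (the finite products of distinct odd primes), with sgn q = (−1)^n when q is a product of n distinct odd primes. Suppose there exists a bijective enumeration q_1, q_2, q_3, ... of Q with the following property: for all real x, y with 1/2 < x < 1 and y > 0 such that ζ(x+iy) = 0, setting δ(k,i) = 1 if q_i divides k and 0 otherwise, f(k,h) = Σ_{i=1}^h sgn(q_i)·δ(k,i), a_k = (−1)^{k−1} k^{−x} cos(y·log k), b_k = (−1)^{k−1} k^{−x} sin(y·log k) (with (−1)^0 = 1), C(n,h) = Σ_{k=1}^n f(k,h)·a_k, and S(n,h) = Σ_{k=1}^n f(k,h)·b_k, the iterated limits lim_{n→∞} lim_{h→∞} C(n,h) and lim_{h→∞} lim_{n→∞} C(n,h) both exist and are equal, and likewise lim_{n→∞} lim_{h→∞} S(n,h) = lim_{h→∞} lim_{n→∞} S(n,h). Then the Riemann hypothesis holds: every zero of ζ in the critical strip 0 < Re(z) < 1 satisfies Re(z) = 1/2. -/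

import Mathlib

/-!
Let `s = x + iy` be a zero of `ζ` in the open critical strip at which the iterated limits exist
and agree. The combination `C(n,h) - i S(n,h)` equals `∑_{k ≤ n} f(k,h) (-1)^{k-1} k^{-s}`, and both
iterated limits of it can be computed, because the alternating series `∑ (-1)^{k-1} k^{-s}`
converges to `(1 - 2^{1-s}) ζ(s) = 0` (`tsum_etaPair`, `tendsto_sum_etaTerm`).

* With `n → ∞` first, each odd `q` contributes `± q^{-s} ∑_m (-1)^{m-1} m^{-s} = 0`, so the common
  limit is `0` (`tendsto_weighted_sum`).
* With `h → ∞` first, Möbius inversion shows that `f(k,h)` tends to `0` if `k` is a power of two and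
  to `-1` otherwise (`tendsto_weight`). The inner limit is therefore the alternating sum over the
  powers of two up to `n` minus the full alternating sum. The latter tends to `0`, and the former
  is geometric with limit `(1 - 2 * 2^{-s}) / (1 - 2^{-s})` along `n = 2^j`.

Hence `2 * 2^{-s} = 1`, which forces `Re s = 1`, a contradiction (`false_of_iterated_limits`). So `ζ`
has no zero with `1/2 < Re < 1` and positive imaginary part. Complex conjugation excludes negative
imaginary parts, positivity of the alternating series on `(0, 1)` excludes real zeros
(`riemannZeta_ofReal_ne_zero`), and the functional equation excludes `0 < Re < 1/2`.
-/

open Filter Finset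

/-- `f(k,h)·a_k` partial sums: `C(n,h)` for the enumeration `e` and zero `x + iy`. -/
noncomputable def Csum (e : ℕ → ℕ) (x y : ℝ) (n h : ℕ) : ℝ :=
  ∑ k ∈ Finset.Icc 1 n,
    (∑ i ∈ Finset.range h,
        (-1 : ℝ) ^ (e i).primeFactors.card * (if e i ∣ k then (1 : ℝ) else 0))
      * ((-1 : ℝ) ^ (k - 1) * (k : ℝ) ^ (-x) * Real.cos (y * Real.log k))

/-- `f(k,h)·b_k` partial sums: `S(n,h)` for the enumeration `e` and zero `x + iy`. -/
noncomputable def Ssum (e : ℕ → ℕ) (x y : ℝ) (n h : ℕ) : ℝ :=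
  ∑ k ∈ Finset.Icc 1 n,
    (∑ i ∈ Finset.range h,
        (-1 : ℝ) ^ (e i).primeFactors.card * (if e i ∣ k then (1 : ℝ) else 0))
      * ((-1 : ℝ) ^ (k - 1) * (k : ℝ) ^ (-x) * Real.sin (y * Real.log k))

/-! ### The alternating zeta series -/

/-- The `m`-th pair `(2m+1)^{-s} - (2m+2)^{-s}` of consecutive terms of the alternating zeta
series. -/
noncomputable def etaPair (m : ℕ) (s : ℂ) : ℂ :=
  (2 * m + 1 : ℂ) ^ (-s) - (2 * m + 2 : ℂ) ^ (-s)

lemma norm_etaPair_le (m : ℕ) {s : ℂ} (hs : 0 < s.re) :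
    ‖etaPair m s‖ ≤ ‖s‖ * (m + 1 : ℝ) ^ (-s.re - 1) := by
  have hpos : (0 : ℝ) < m + 1 := by positivity
  have hs0 : -s ≠ 0 := by
    intro h
    have := congrArg Complex.re h
    simp at this
    linarith
  have key := (convex_Icc (2 * m + 1 : ℝ) (2 * m + 2)).norm_image_sub_le_of_norm_hasDerivWithin_le
    (f := fun t : ℝ => (t : ℂ) ^ (-s)) (f' := fun t : ℝ => -s * (t : ℂ) ^ (-s - 1))
    (C := ‖s‖ * (m + 1 : ℝ) ^ (-s.re - 1)) (x := 2 * m + 2) (y := 2 * m + 1)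
    (fun t ht => by
      have ht0 : 0 < t := by have := ht.1; linarith
      exact (hasDerivAt_ofReal_cpow_const ht0.ne' hs0).hasDerivWithinAt)
    (fun t ht => by
      have ht1 : (m + 1 : ℝ) ≤ t := by
        have := ht.1
        have : (0 : ℝ) ≤ m := by positivity
        linarith
      have ht0 : 0 < t := by linarith
      rw [norm_mul, norm_neg, Complex.norm_cpow_eq_rpow_re_of_pos ht0]
      simp only [Complex.sub_re, Complex.neg_re, Complex.one_re]
      refine mul_le_mul_of_nonneg_left ?_ (norm_nonneg s)
      exact Real.rpow_le_rpow_of_nonpos hpos ht1 (by linarith))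
    (by constructor <;> linarith) (by constructor <;> linarith)
  have h1 : ‖(2 * m + 1 : ℝ) - (2 * m + 2)‖ = 1 := by
    rw [Real.norm_eq_abs]; norm_num
  rw [h1, mul_one] at key
  simpa [etaPair] using key

lemma summable_nat_succ_rpow {a : ℝ} (ha : 0 < a) :
    Summable fun m : ℕ => (m + 1 : ℝ) ^ (-a - 1) := by
  have := (summable_nat_add_iff 1).mpr (Real.summable_nat_rpow (p := -a - 1) |>.mpr (by linarith))
  simpa using this

lemma summable_etaPair {s : ℂ} (hs : 0 < s.re) : Summable fun m => etaPair m s :=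
  Summable.of_norm_bounded ((summable_nat_succ_rpow hs).mul_left ‖s‖)
    fun m => norm_etaPair_le m hs

lemma tsum_etaPair_of_one_lt_re {s : ℂ} (hs : 1 < s.re) :
    ∑' m, etaPair m s = (1 - 2 ^ (1 - s)) * riemannZeta s := by
  have hsum : Summable fun n : ℕ => (n + 1 : ℂ) ^ (-s) := by
    have := (summable_nat_add_iff 1).mpr (Complex.summable_one_div_nat_cpow.mpr hs)
    refine this.congr fun n => ?_
    rw [Complex.cpow_neg]; push_cast; simp
  have hz : riemannZeta s = ∑' n : ℕ, (n + 1 : ℂ) ^ (-s) := by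
    rw [zeta_eq_tsum_one_div_nat_add_one_cpow hs]
    simp [Complex.cpow_neg]
  have he : Summable fun m : ℕ => (2 * m + 1 : ℂ) ^ (-s) := by
    have := hsum.comp_injective (i := fun m : ℕ => 2 * m) (fun a b h => by simpa using h)
    refine this.congr fun n => ?_
    simp
  have hodd : ∀ m : ℕ, (2 * m + 2 : ℂ) ^ (-s) = 2 ^ (-s) * (m + 1 : ℂ) ^ (-s) := fun m => by
    have := Complex.mul_cpow_ofReal_nonneg (a := 2) (b := m + 1) (by norm_num) (by positivity) (-s)
    push_cast at this
    rw [← this]; ring_nf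
  have ho : Summable fun m : ℕ => (2 * m + 2 : ℂ) ^ (-s) := by
    simp_rw [hodd]; exact hsum.mul_left _
  have hsplit := tsum_even_add_odd (f := fun n : ℕ => (n + 1 : ℂ) ^ (-s))
    (he.congr fun m => by simp) (ho.congr fun m => by push_cast; ring_nf)
  have e1 : ∑' m : ℕ, (2 * m + 2 : ℂ) ^ (-s) = 2 ^ (-s) * riemannZeta s := by
    simp_rw [hodd]; rw [tsum_mul_left, hz]
  have e2 : (∑' m : ℕ, (2 * m + 1 : ℂ) ^ (-s)) + ∑' m : ℕ, (2 * m + 2 : ℂ) ^ (-s)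
      = riemannZeta s := by
    rw [hz, ← hsplit]
    congr 1
    · simp
    · refine tsum_congr fun m => ?_
      push_cast; ring_nf
  have e3 : (2 : ℂ) ^ (1 - s) = 2 * 2 ^ (-s) := by
    rw [sub_eq_add_neg, Complex.cpow_add _ _ (by norm_num), Complex.cpow_one]
  unfold etaPair
  rw [he.tsum_sub ho, e3]
  rw [e1] at e2 ⊢
  linear_combination e2

/-- The alternating series continues `(1 - 2^{1-s}) ζ(s)` to `Re s > 0`. Multiplying by `s - 1`
(absorbed by the entire function `riemannZeta₁`) removes the pole, so that the identity theorem
can be applied on a convex region. -/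
lemma sub_one_mul_tsum_etaPair {s : ℂ} (hs : 0 < s.re) :
    (s - 1) * ∑' m, etaPair m s = (1 - 2 ^ (1 - s)) * riemannZeta₁ s := by
  -- a bounded convex region away from the imaginary axis containing both `s` and `s + 2`
  set U : Set ℂ := {w | s.re / 2 < w.re} ∩ Metric.ball 0 (‖s‖ + 3) with hU
  have hUo : IsOpen U := (isOpen_lt continuous_const Complex.continuous_re).inter Metric.isOpen_ball
  have hUc : IsPreconnected U :=
    ((convex_halfSpace_re_gt _).inter (convex_ball _ _)).isPreconnected
  have hd : DifferentiableOn ℂ (fun w => ∑' m, etaPair m w) U := by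
    refine Complex.differentiableOn_tsum_of_summable_norm
      (u := fun m : ℕ => (‖s‖ + 3) * (m + 1 : ℝ) ^ (-(s.re / 2) - 1))
      ((summable_nat_succ_rpow (half_pos hs)).mul_left _) (fun m w hw => ?_) hUo
      (fun m w hw => ?_)
    · have h1 : (2 * m + 1 : ℂ) ≠ 0 := by exact_mod_cast (2 * m).succ_ne_zero
      have h2 : (2 * m + 2 : ℂ) ≠ 0 := by
        exact_mod_cast (2 * m + 1).succ_ne_zero
      refine DifferentiableAt.differentiableWithinAt ?_
      exact (differentiableAt_id.neg.const_cpow (Or.inl h1)).sub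
        (differentiableAt_id.neg.const_cpow (Or.inl h2))
    · have hw1 : s.re / 2 < w.re := hw.1
      have hw2 : ‖w‖ < ‖s‖ + 3 := by simpa using hw.2
      refine (norm_etaPair_le m (by linarith)).trans ?_
      gcongr
      have : (0 : ℝ) ≤ m := by positivity
      linarith
  have hL : AnalyticOnNhd ℂ (fun w => (w - 1) * ∑' m, etaPair m w) U :=
    (((differentiable_id.sub_const 1).differentiableOn).mul hd).analyticOnNhd hUo
  have hR : AnalyticOnNhd ℂ (fun w => (1 - 2 ^ (1 - w)) * riemannZeta₁ w) U := by
    refine DifferentiableOn.analyticOnNhd (Differentiable.differentiableOn ?_) hUo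
    have h2 : Differentiable ℂ fun w : ℂ => (2 : ℂ) ^ (1 - w) := fun w =>
      ((differentiableAt_const 1).sub differentiableAt_id).const_cpow (Or.inl (by norm_num))
    exact ((differentiable_const 1).sub h2).mul differentiable_riemannZeta₁
  have hmem : s + 2 ∈ U := by
    refine ⟨by simp; linarith, ?_⟩
    have := norm_add_le s 2
    simp only [mem_ball_zero_iff]
    norm_num at this
    linarith
  have hev : (fun w => (w - 1) * ∑' m, etaPair m w) =ᶠ[nhds (s + 2)]
      fun w => (1 - 2 ^ (1 - w)) * riemannZeta₁ w := by
    have : {w : ℂ | 1 < w.re} ∈ nhds (s + 2) :=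
      (isOpen_lt continuous_const Complex.continuous_re).mem_nhds (by simp; linarith)
    filter_upwards [this] with w hw
    have hw1 : w - 1 ≠ 0 := by
      intro h
      rw [sub_eq_zero] at h
      simp [h] at hw
    rw [tsum_etaPair_of_one_lt_re hw, riemannZeta_eq_inv_sub_mul (sub_ne_zero.mp hw1)]
    field_simp
  exact hL.eqOn_of_preconnected_of_eventuallyEq hR hUc hmem hev
    ⟨by simp; linarith, by simp⟩

lemma tsum_etaPair {s : ℂ} (hs : 0 < s.re) (hs1 : s ≠ 1) :
    ∑' m, etaPair m s = (1 - 2 ^ (1 - s)) * riemannZeta s := by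
  have h := sub_one_mul_tsum_etaPair hs
  have hne : s - 1 ≠ 0 := sub_ne_zero.mpr hs1
  rw [riemannZeta_eq_inv_sub_mul hs1]
  field_simp
  rw [mul_comm, h]

/-- On `(0, 1)` every pair `(2m+1)^{-x} - (2m+2)^{-x}` is positive, so `ζ` has no real zero
there. -/
lemma riemannZeta_ofReal_ne_zero {x : ℝ} (h0 : 0 < x) (h1 : x < 1) :
    riemannZeta (x : ℂ) ≠ 0 := by
  intro hz
  have hx : 0 < (x : ℂ).re := by simpa using h0
  have hsum := summable_etaPair hx
  have ht : ∑' m, etaPair m (x : ℂ) = 0 := by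
    rw [tsum_etaPair hx (by exact_mod_cast h1.ne), hz, mul_zero]
  have hp : ∀ m : ℕ, etaPair m (x : ℂ)
      = (((2 * m + 1 : ℝ) ^ (-x) - (2 * m + 2 : ℝ) ^ (-x) : ℝ) : ℂ) := fun m => by
    rw [etaPair, Complex.ofReal_sub, Complex.ofReal_cpow (by positivity),
      Complex.ofReal_cpow (by positivity)]
    push_cast; rfl
  have hpos : ∀ m : ℕ, 0 < (2 * m + 1 : ℝ) ^ (-x) - (2 * m + 2 : ℝ) ^ (-x) := fun m =>
    sub_pos.mpr (Real.rpow_lt_rpow_of_neg (by positivity) (by linarith) (by linarith))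
  simp_rw [hp] at hsum ht
  rw [← Complex.ofReal_tsum] at ht
  have := (Complex.summable_ofReal.mp hsum).tsum_pos (fun m => (hpos m).le) 0 (hpos 0)
  rw [Complex.ofReal_eq_zero.mp ht] at this
  exact lt_irrefl _ this

/-- The `k`-th term `(-1)^{k-1} k^{-s}` of the alternating zeta series. -/
noncomputable def etaTerm (s : ℂ) (k : ℕ) : ℂ := (-1) ^ (k - 1) * (k : ℂ) ^ (-s)

lemma sum_etaTerm_even (s : ℂ) (M : ℕ) :
    ∑ k ∈ Icc 1 (2 * M), etaTerm s k = ∑ m ∈ range M, etaPair m s := by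
  induction M with
  | zero => simp
  | succ M ih =>
    rw [show 2 * (M + 1) = 2 * M + 1 + 1 by ring, sum_Icc_succ_top (by omega),
      sum_Icc_succ_top (by omega), ih, sum_range_succ, etaTerm, etaTerm, etaPair]
    simp [pow_succ]
    ring_nf

/-- At a zero of `ζ` with positive real part the alternating series converges to `0`. -/
lemma tendsto_sum_etaTerm {s : ℂ} (hs : 0 < s.re) (hs1 : s ≠ 1) (hz : riemannZeta s = 0) :
    Tendsto (fun N => ∑ k ∈ Icc 1 N, etaTerm s k) atTop (nhds 0) := by
  have ht : Tendsto (fun M => ∑ m ∈ range M, etaPair m s) atTop (nhds 0) := by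
    have := (summable_etaPair hs).hasSum.tendsto_sum_nat
    rwa [tsum_etaPair hs hs1, hz, mul_zero] at this
  have ht2 := ht.comp (Nat.tendsto_div_const_atTop (n := 2) (by norm_num))
  have hterm : Tendsto (fun N : ℕ => (N : ℝ) ^ (-s.re)) atTop (nhds 0) :=
    (tendsto_rpow_neg_atTop hs).comp tendsto_natCast_atTop_atTop
  have hdiff : Tendsto (fun N : ℕ => ∑ k ∈ Icc 1 N, etaTerm s k
      - ∑ m ∈ range (N / 2), etaPair m s) atTop (nhds 0) := by
    refine squeeze_zero_norm' ?_ hterm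
    filter_upwards [eventually_gt_atTop 0] with N hN
    rw [← sum_etaTerm_even]
    rcases Nat.even_or_odd' N with ⟨c, rfl | rfl⟩
    · rw [Nat.mul_div_cancel_left _ (by norm_num), sub_self, norm_zero]
      positivity
    · rw [show (2 * c + 1) / 2 = c by omega, sum_Icc_succ_top (by omega), add_sub_cancel_left,
        etaTerm, norm_mul, Complex.norm_natCast_cpow_of_pos hN]
      simp
  simpa using hdiff.add ht2

/-! ### The weighted sums and their iterated limits -/

lemma natCast_cpow_eq {k : ℕ} (hk : 0 < k) (x y : ℝ) :
    (k : ℂ) ^ (-((x : ℂ) + y * Complex.I))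
      = ((k : ℝ) ^ (-x) * Real.cos (y * Real.log k) : ℝ)
        - Complex.I * ((k : ℝ) ^ (-x) * Real.sin (y * Real.log k) : ℝ) := by
  have hk0 : (k : ℂ) ≠ 0 := by exact_mod_cast hk.ne'
  have h1 : (k : ℂ) ^ (-(x : ℂ)) = ((k : ℝ) ^ (-x) : ℝ) := by
    rw [Complex.ofReal_cpow (by positivity)]; push_cast; rfl
  have h2 : (k : ℂ) ^ (-(y * Complex.I))
      = Real.cos (y * Real.log k) - Complex.I * Real.sin (y * Real.log k) := by
    have hlog : Complex.log k = (Real.log k : ℝ) := by simp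
    rw [Complex.cpow_def_of_ne_zero hk0, hlog,
      show ((Real.log k : ℝ) : ℂ) * -(y * Complex.I)
        = ((-(y * Real.log k) : ℝ) : ℂ) * Complex.I by push_cast; ring,
      Complex.exp_mul_I, ← Complex.ofReal_cos, ← Complex.ofReal_sin, Real.cos_neg, Real.sin_neg]
    push_cast; ring
  rw [neg_add, Complex.cpow_add _ _ hk0, h1, h2]
  push_cast; ring

/-- The weight `f(k, h)` of the `k`-th term. -/
noncomputable def weight (e : ℕ → ℕ) (h k : ℕ) : ℝ :=
  ∑ i ∈ range h, (-1 : ℝ) ^ (e i).primeFactors.card * (if e i ∣ k then (1 : ℝ) else 0)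

/-- `C(n,h) - i S(n,h)` is a weighted partial sum of the alternating zeta series. -/
lemma Csum_sub_I_mul_Ssum (e : ℕ → ℕ) (x y : ℝ) (n h : ℕ) :
    (Csum e x y n h : ℂ) - Complex.I * (Ssum e x y n h : ℂ)
      = ∑ k ∈ Icc 1 n, (weight e h k : ℂ) * etaTerm (x + y * Complex.I) k := by
  rw [Csum, Ssum, Complex.ofReal_sum, Complex.ofReal_sum, mul_sum, ← sum_sub_distrib]
  refine sum_congr rfl fun k hk => ?_
  rw [etaTerm, natCast_cpow_eq (mem_Icc.mp hk).1, ← weight]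
  push_cast; ring

lemma sum_moebius_divisors (m : ℕ) :
    ∑ q ∈ m.divisors, ArithmeticFunction.moebius q = if m = 1 then 1 else 0 := by
  rw [← ArithmeticFunction.coe_mul_zeta_apply, ArithmeticFunction.moebius_mul_coe_zeta,
    ArithmeticFunction.one_apply]

open Classical in
/-- The limit of the weights `f(k, h)` as `h → ∞`: Möbius inversion over the odd divisors of `k`,
with the divisor `1` left out, gives `0` when `k` is a power of two and `-1` otherwise. -/
lemma sum_sgn_divisors {k : ℕ} (hk : k ≠ 0) :
    ∑ q ∈ k.divisors with (Squarefree q ∧ Odd q ∧ 1 < q), (-1 : ℝ) ^ q.primeFactors.card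
      = if k ∈ Set.range (fun a : ℕ => 2 ^ a) then 0 else -1 := by
  obtain ⟨a, m, hm, rfl⟩ := Nat.exists_eq_two_pow_mul_odd hk
  have hm0 : m ≠ 0 := by rintro rfl; simp at hm
  have hiff : 2 ^ a * m ∈ Set.range (fun a : ℕ => 2 ^ a) ↔ m = 1 := by
    constructor
    · rintro ⟨b, hb⟩
      have hdvd : m ∣ 2 ^ b := by
        have : 2 ^ b = 2 ^ a * m := hb
        rw [this]; exact dvd_mul_left _ _
      exact Nat.eq_one_of_dvd_coprimes (hm.coprime_two_left.pow_left b) hdvd dvd_rfl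
    · rintro rfl
      exact ⟨a, by simp⟩
  have hsum : ∑ q ∈ (2 ^ a * m).divisors with (Squarefree q ∧ Odd q ∧ 1 < q),
      (-1 : ℤ) ^ q.primeFactors.card
      = ∑ q ∈ m.divisors.erase 1, ArithmeticFunction.moebius q := by
    have hsub : {q ∈ (2 ^ a * m).divisors | Squarefree q ∧ Odd q ∧ 1 < q} ⊆
        m.divisors.erase 1 := fun q hq => by
      simp only [mem_filter, Nat.mem_divisors] at hq
      obtain ⟨⟨hd, -⟩, -, ho, h1⟩ := hq
      rw [mem_erase, Nat.mem_divisors]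
      exact ⟨h1.ne', (ho.coprime_two_right.pow_right a).dvd_of_dvd_mul_left hd, hm0⟩
    rw [← sum_subset hsub]
    · refine sum_congr rfl fun q hq => ?_
      have hsq : Squarefree q := (mem_filter.mp hq).2.1
      rw [ArithmeticFunction.moebius_apply_of_squarefree hsq,
        ← (ArithmeticFunction.cardDistinctFactors_eq_cardFactors_iff_squarefree hsq.ne_zero).mpr
          hsq]
      rfl
    · intro q hq hq'
      rw [mem_erase, Nat.mem_divisors] at hq
      refine ArithmeticFunction.moebius_eq_zero_of_not_squarefree fun hsq => hq' ?_
      rw [mem_filter, Nat.mem_divisors]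
      have hq0 : 0 < q := Nat.pos_of_dvd_of_pos hq.2.1 (Nat.pos_of_ne_zero hm0)
      exact ⟨⟨hq.2.1.mul_left _, hk⟩, hsq, hm.of_dvd_nat hq.2.1, by have := hq.1; omega⟩
  have herase := add_sum_erase m.divisors (fun q => ArithmeticFunction.moebius q)
    (Nat.one_mem_divisors.mpr hm0)
  simp only [ArithmeticFunction.moebius_apply_one] at herase
  rw [sum_moebius_divisors m, ← hsum] at herase
  have hcast := congrArg (Int.cast : ℤ → ℝ) herase
  push_cast at hcast
  simp only [hiff]
  split_ifs with h
  · simp only [h, if_true] at hcast ⊢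
    linarith
  · simp only [h, if_false] at hcast ⊢
    linarith

open Classical in
lemma tendsto_weight {e : ℕ → ℕ} (he : Function.Injective e)
    (hr : Set.range e = {q : ℕ | Squarefree q ∧ Odd q ∧ 1 < q}) {k : ℕ} (hk : k ≠ 0) :
    Tendsto (fun h => weight e h k) atTop
      (nhds (if k ∈ Set.range (fun a : ℕ => 2 ^ a) then 0 else -1)) := by
  set F : ℕ → ℝ := fun q => if (Squarefree q ∧ Odd q ∧ 1 < q) ∧ q ∣ k then
    (-1 : ℝ) ^ q.primeFactors.card else 0 with hF
  have hmem : ∀ i, Squarefree (e i) ∧ Odd (e i) ∧ 1 < e i := fun i => by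
    have : e i ∈ Set.range e := ⟨i, rfl⟩
    rwa [hr] at this
  have h1 : HasSum F (∑ q ∈ k.divisors with (Squarefree q ∧ Odd q ∧ 1 < q),
      (-1 : ℝ) ^ q.primeFactors.card) := by
    have := hasSum_sum_of_ne_finset_zero (f := F) (L := SummationFilter.unconditional ℕ)
      (s := {q ∈ k.divisors | Squarefree q ∧ Odd q ∧ 1 < q}) (fun q hq => by
        rw [hF]
        refine if_neg fun hc => hq ?_
        rw [mem_filter, Nat.mem_divisors]
        exact ⟨⟨hc.2, hk⟩, hc.1⟩)
    convert this using 1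
    refine sum_congr rfl fun q hq => ?_
    rw [mem_filter, Nat.mem_divisors] at hq
    exact (if_pos ⟨hq.2, hq.1.1⟩).symm
  have h2 : HasSum (F ∘ e) _ := (he.hasSum_iff fun q hq => if_neg fun hc => hq (by
    rw [hr]; exact hc.1)).mpr h1
  have h3 := h2.tendsto_sum_nat
  rw [sum_sgn_divisors hk] at h3
  convert h3 using 2 with h
  refine sum_congr rfl fun i _ => ?_
  simp [hF, hmem i]

/-- Summing the alternating zeta series over the multiples of an odd `q` multiplies it by
`q^{-s}`. -/
lemma sum_etaTerm_multiples (s : ℂ) {q : ℕ} (hq : Odd q) (n : ℕ) :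
    ∑ k ∈ Icc 1 n with q ∣ k, etaTerm s k = (q : ℂ) ^ (-s) * ∑ k ∈ Icc 1 (n / q), etaTerm s k := by
  have hq0 : 0 < q := hq.pos
  rw [mul_sum]
  symm
  refine sum_nbij (fun m => q * m) ?_ ?_ ?_ ?_
  · intro m hm
    rw [mem_Icc, Nat.le_div_iff_mul_le hq0] at hm
    simp only [mem_filter, mem_Icc]
    exact ⟨⟨Nat.mul_pos hq0 hm.1, by rw [mul_comm]; exact hm.2⟩, dvd_mul_right _ _⟩
  · intro a _ b _ h
    exact Nat.eq_of_mul_eq_mul_left hq0 h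
  · intro k hk
    simp only [coe_filter, mem_Icc, Set.mem_ofPred_eq] at hk
    obtain ⟨⟨h1, h2⟩, m, rfl⟩ := hk
    refine ⟨m, ?_, rfl⟩
    rw [mem_coe, mem_Icc, Nat.le_div_iff_mul_le hq0]
    exact ⟨Nat.pos_of_mul_pos_left h1, by rw [mul_comm]; exact h2⟩
  · intro m hm
    have hm1 : 1 ≤ m := (mem_Icc.mp hm).1
    have hsign : (-1 : ℂ) ^ (q * m - 1) = (-1) ^ (m - 1) := by
      obtain ⟨j, rfl⟩ := hq
      obtain ⟨l, rfl⟩ := Nat.exists_eq_add_of_le hm1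
      rw [show (2 * j + 1) * (1 + l) - 1 = 2 * (j * (1 + l)) + l by
          rw [show (2 * j + 1) * (1 + l) = 2 * (j * (1 + l)) + l + 1 by ring]; rfl,
        pow_add, pow_mul]
      simp
    rw [etaTerm, etaTerm, hsign, Nat.cast_mul, Complex.natCast_mul_natCast_cpow]
    ring

/-- At a zero of `ζ`, letting `n → ∞` first gives `0`, since every `q` is odd. -/
lemma tendsto_weighted_sum {e : ℕ → ℕ} (hodd : ∀ i, Odd (e i)) {s : ℂ} (hs : 0 < s.re)
    (hs1 : s ≠ 1) (hz : riemannZeta s = 0) (h : ℕ) :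
    Tendsto (fun n => ∑ k ∈ Icc 1 n, (weight e h k : ℂ) * etaTerm s k) atTop (nhds 0) := by
  have heq : ∀ n, ∑ k ∈ Icc 1 n, (weight e h k : ℂ) * etaTerm s k
      = ∑ i ∈ range h, (-1 : ℂ) ^ (e i).primeFactors.card *
        ((e i : ℂ) ^ (-s) * ∑ k ∈ Icc 1 (n / e i), etaTerm s k) := fun n => by
    simp_rw [← sum_etaTerm_multiples s (hodd _), weight, Complex.ofReal_sum, sum_mul]
    rw [sum_comm]
    refine sum_congr rfl fun i _ => ?_
    rw [sum_filter, mul_sum]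
    refine sum_congr rfl fun k _ => ?_
    split_ifs <;> simp
  simp_rw [heq]
  have := tendsto_finsetSum (range h) fun i _ =>
    (((tendsto_sum_etaTerm hs hs1 hz).comp
      (Nat.tendsto_div_const_atTop (hodd i).pos.ne')).const_mul
        ((e i : ℂ) ^ (-s))).const_mul ((-1 : ℂ) ^ (e i).primeFactors.card)
  simpa using this

lemma natCast_two_pow_cpow (w : ℂ) (j : ℕ) : ((2 ^ j : ℕ) : ℂ) ^ w = (2 ^ w) ^ j := by
  induction j with
  | zero => simp
  | succ j ih =>
    rw [pow_succ, Nat.cast_mul, Complex.natCast_mul_natCast_cpow, ih, pow_succ, Nat.cast_ofNat]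

open Classical in
/-- The partial sums of the alternating zeta series over the powers of two are geometric. -/
lemma sum_etaTerm_two_pow (s : ℂ) (j : ℕ) :
    (∑ k ∈ Icc 1 (2 ^ j) with k ∈ Set.range (fun a : ℕ => 2 ^ a), etaTerm s k) * (1 - 2 ^ (-s))
      = 1 - 2 * 2 ^ (-s) + (2 ^ (-s)) ^ (j + 1) := by
  induction j with
  | zero =>
    have : ({k ∈ Icc 1 (2 ^ 0) | k ∈ Set.range (fun a : ℕ => 2 ^ a)} : Finset ℕ) = {1} := by
      ext k
      simp only [pow_zero, Icc_self, mem_filter, mem_singleton]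
      exact ⟨fun h => h.1, fun h => ⟨h, 0, by simp [h]⟩⟩
    rw [this, sum_singleton, etaTerm]
    simp
    ring
  | succ j ih =>
    have hset : ({k ∈ Icc 1 (2 ^ (j + 1)) | k ∈ Set.range (fun a : ℕ => 2 ^ a)} : Finset ℕ)
        = insert (2 ^ (j + 1)) {k ∈ Icc 1 (2 ^ j) | k ∈ Set.range (fun a : ℕ => 2 ^ a)} := by
      ext k
      simp only [mem_filter, mem_insert, mem_Icc]
      constructor
      · rintro ⟨⟨h1, h2⟩, a, rfl⟩
        have ha : a ≤ j + 1 := (Nat.pow_le_pow_iff_right (by norm_num)).mp h2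
        rcases ha.eq_or_lt with rfl | ha
        · exact Or.inl rfl
        · exact Or.inr ⟨⟨h1, Nat.pow_le_pow_right (by norm_num) (by omega)⟩, a, rfl⟩
      · rintro (rfl | ⟨⟨h1, h2⟩, h3⟩)
        · exact ⟨⟨Nat.one_le_two_pow, le_rfl⟩, j + 1, rfl⟩
        · exact ⟨⟨h1, h2.trans (Nat.pow_le_pow_right (by norm_num) (by omega))⟩, h3⟩
    have hnot : 2 ^ (j + 1) ∉
        ({k ∈ Icc 1 (2 ^ j) | k ∈ Set.range (fun a : ℕ => 2 ^ a)} : Finset ℕ) := fun h => by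
      have := (mem_Icc.mp (mem_filter.mp h).1).2
      rw [pow_succ] at this
      have := Nat.two_pow_pos j
      omega
    have hterm : etaTerm s (2 ^ (j + 1)) = -(2 ^ (-s)) ^ (j + 1) := by
      have hodd : Odd (2 ^ (j + 1) - 1) := by
        refine Nat.Even.sub_odd Nat.one_le_two_pow ?_ odd_one
        rw [pow_succ]; exact even_two.mul_left _
      rw [etaTerm, hodd.neg_one_pow]
      rw [natCast_two_pow_cpow, neg_one_mul]
    rw [hset, sum_insert hnot, add_mul, ih, hterm]
    ring

/-- A zero of `ζ` with `0 < Re < 1` contradicts the equality of the iterated limits: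
with `n → ∞` first the common limit is `0`, whereas with `h → ∞` first the alternating sum over the
powers of two would have to vanish, that is, `1 = 2 * 2^{-s}`. -/
lemma false_of_iterated_limits {e : ℕ → ℕ} (he : Function.Injective e)
    (hr : Set.range e = {q : ℕ | Squarefree q ∧ Odd q ∧ 1 < q}) {x y : ℝ} (hx0 : 0 < x)
    (hx1 : x < 1) (hz : riemannZeta ((x : ℂ) + (y : ℂ) * Complex.I) = 0)
    (hC : ∃ (g g' : ℕ → ℝ) (L : ℝ),
      (∀ n : ℕ, Tendsto (fun h : ℕ => Csum e x y n h) atTop (nhds (g n))) ∧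
      Tendsto g atTop (nhds L) ∧
      (∀ h : ℕ, Tendsto (fun n : ℕ => Csum e x y n h) atTop (nhds (g' h))) ∧
      Tendsto g' atTop (nhds L))
    (hS : ∃ (g g' : ℕ → ℝ) (L : ℝ),
      (∀ n : ℕ, Tendsto (fun h : ℕ => Ssum e x y n h) atTop (nhds (g n))) ∧
      Tendsto g atTop (nhds L) ∧
      (∀ h : ℕ, Tendsto (fun n : ℕ => Ssum e x y n h) atTop (nhds (g' h))) ∧
      Tendsto g' atTop (nhds L)) : False := by
  classical
  obtain ⟨g, g', L, hg, hgL, hg', hgL'⟩ := hC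
  obtain ⟨u, u', K, hu, huK, hu', huK'⟩ := hS
  set s : ℂ := (x : ℂ) + (y : ℂ) * Complex.I with hs
  have hre : s.re = x := by simp [hs]
  have hs0 : 0 < s.re := by rwa [hre]
  have hs1 : s ≠ 1 := fun h => by
    rw [h, Complex.one_re] at hre
    linarith
  have hodd : ∀ i, Odd (e i) := fun i => by
    have : e i ∈ Set.range e := ⟨i, rfl⟩
    rw [hr] at this
    exact this.2.1
  have comb : ∀ {f f' : ℕ → ℝ} {a b : ℝ}, Tendsto f atTop (nhds a) → Tendsto f' atTop (nhds b) →
      Tendsto (fun n => (f n : ℂ) - Complex.I * (f' n : ℂ)) atTop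
        (nhds ((a : ℂ) - Complex.I * (b : ℂ))) := fun {f f' a b} h1 h2 =>
    ((Complex.continuous_ofReal.tendsto a).comp h1).sub
      (((Complex.continuous_ofReal.tendsto b).comp h2).const_mul Complex.I)
  have hinner' : ∀ h, (g' h : ℂ) - Complex.I * (u' h : ℂ) = 0 := fun h => by
    have := comb (hg' h) (hu' h)
    simp_rw [Csum_sub_I_mul_Ssum] at this
    exact tendsto_nhds_unique this (tendsto_weighted_sum hodd hs0 hs1 hz h)
  have hL0 : (L : ℂ) - Complex.I * (K : ℂ) = 0 := by
    have := comb hgL' huK'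
    simp_rw [hinner'] at this
    exact tendsto_nhds_unique this tendsto_const_nhds
  have hinner : ∀ n, (g n : ℂ) - Complex.I * (u n : ℂ)
      = (∑ k ∈ Icc 1 n with k ∈ Set.range (fun a : ℕ => 2 ^ a), etaTerm s k)
        - ∑ k ∈ Icc 1 n, etaTerm s k := fun n => by
    have h1 := comb (hg n) (hu n)
    simp_rw [Csum_sub_I_mul_Ssum] at h1
    have h2 := tendsto_finsetSum (Icc 1 n) fun k hk =>
      ((Complex.continuous_ofReal.tendsto _).comp
        (tendsto_weight he hr (k := k) (by have := (mem_Icc.mp hk).1; omega))).mul_const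
          (etaTerm s k)
    rw [tendsto_nhds_unique h1 h2, sum_filter, ← sum_sub_distrib]
    refine sum_congr rfl fun k _ => ?_
    split_ifs <;> simp
  have hpow : Tendsto (fun n => ∑ k ∈ Icc 1 n with k ∈ Set.range (fun a : ℕ => 2 ^ a),
      etaTerm s k) atTop (nhds 0) := by
    have h1 := comb hgL huK
    simp_rw [hinner, hL0] at h1
    simpa using h1.add (tendsto_sum_etaTerm hs0 hs1 hz)
  have hnorm : ‖(2 : ℂ) ^ (-s)‖ = 2 ^ (-x) := by
    have := Complex.norm_natCast_cpow_of_pos (n := 2) (by norm_num) (-s)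
    simpa [hre] using this
  have hlt : ‖(2 : ℂ) ^ (-s)‖ < 1 := by
    rw [hnorm]
    exact Real.rpow_lt_one_of_one_lt_of_neg (by norm_num) (by linarith)
  have hgeo : Tendsto (fun j : ℕ => 1 - 2 * (2 : ℂ) ^ (-s) + (2 ^ (-s)) ^ (j + 1)) atTop
      (nhds (1 - 2 * (2 : ℂ) ^ (-s))) := by
    simpa using ((tendsto_add_atTop_iff_nat 1).mpr
      (tendsto_pow_atTop_nhds_zero_of_norm_lt_one hlt)).const_add (1 - 2 * (2 : ℂ) ^ (-s))
  have hlim := (hpow.comp (tendsto_pow_atTop_atTop_of_one_lt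
    (r := 2) (by norm_num))).mul_const (1 - (2 : ℂ) ^ (-s))
  simp only [Function.comp_def, sum_etaTerm_two_pow, zero_mul] at hlim
  have hval : 2 * (2 : ℂ) ^ (-s) = 1 := (sub_eq_zero.mp (tendsto_nhds_unique hgeo hlim)).symm
  have hval' : 2 * (2 : ℝ) ^ (-x) = 1 := by
    have := congrArg norm hval
    rwa [norm_mul, hnorm, norm_one, Complex.norm_ofNat] at this
  have hgt : (2 : ℝ) ^ (-1 : ℝ) < 2 ^ (-x) :=
    Real.rpow_lt_rpow_of_exponent_lt (by norm_num) (by linarith)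
  rw [Real.rpow_neg_one] at hgt
  linarith

theorem stmt_10
    (hcond : ∃ e : ℕ → ℕ, Function.Injective e ∧
      Set.range e = {q : ℕ | Squarefree q ∧ Odd q ∧ 1 < q} ∧
      ∀ x y : ℝ, 1 / 2 < x → x < 1 → 0 < y →
        riemannZeta ((x : ℂ) + (y : ℂ) * Complex.I) = 0 →
        (∃ (g g' : ℕ → ℝ) (L : ℝ),
          (∀ n : ℕ, Tendsto (fun h : ℕ => Csum e x y n h) atTop (nhds (g n))) ∧
          Tendsto g atTop (nhds L) ∧
          (∀ h : ℕ, Tendsto (fun n : ℕ => Csum e x y n h) atTop (nhds (g' h))) ∧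
          Tendsto g' atTop (nhds L)) ∧
        (∃ (g g' : ℕ → ℝ) (L : ℝ),
          (∀ n : ℕ, Tendsto (fun h : ℕ => Ssum e x y n h) atTop (nhds (g n))) ∧
          Tendsto g atTop (nhds L) ∧
          (∀ h : ℕ, Tendsto (fun n : ℕ => Ssum e x y n h) atTop (nhds (g' h))) ∧
          Tendsto g' atTop (nhds L))) :
    ∀ z : ℂ, riemannZeta z = 0 → 0 < z.re → z.re < 1 → z.re = 1 / 2 := by

  obtain ⟨e, he, hr, hlim⟩ := hcond
  have main : ∀ x y : ℝ, 1 / 2 < x → x < 1 → 0 < y →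
      riemannZeta ((x : ℂ) + (y : ℂ) * Complex.I) ≠ 0 := fun x y hx hx1 hy hz =>
    false_of_iterated_limits he hr (by linarith) hx1 hz (hlim x y hx hx1 hy hz).1
      (hlim x y hx hx1 hy hz).2
  have right : ∀ z : ℂ, 1 / 2 < z.re → z.re < 1 → riemannZeta z ≠ 0 := fun z h0 h1 hz => by
    rcases lt_trichotomy z.im 0 with him | him | him
    · refine main z.re (-z.im) h0 h1 (by linarith) ?_
      have : (z.re : ℂ) + ((-z.im : ℝ) : ℂ) * Complex.I = starRingEnd ℂ z := by
        apply Complex.ext <;> simp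
      rw [this, riemannZeta_conj, hz, map_zero]
    · refine riemannZeta_ofReal_ne_zero (x := z.re) (by linarith) h1 ?_
      have : (z.re : ℂ) = z := by apply Complex.ext <;> simp [him]
      rwa [this]
    · exact main z.re z.im h0 h1 him (by rwa [Complex.re_add_im])
  intro z hz h0 h1
  rcases lt_trichotomy z.re (1 / 2) with h | h | h
  · exfalso
    refine right (1 - z) (by simp; linarith) (by simp; linarith) ?_
    rw [riemannZeta_one_sub (fun n hn => ?_) (fun hn => ?_), hz, mul_zero]
    · have := congrArg Complex.re hn
      simp at this
      have hn0 : (0 : ℝ) ≤ n := by positivity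
      linarith
    · rw [hn, Complex.one_re] at h1
      exact lt_irrefl _ h1
  · exact h
  · exact absurd hz (right z h h1)
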